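/- Let 3 ≤ r ≤ n, let T be a point of PG(1,q^n) and A a set of q^{r-1} points of PG(1,q^n) with T ∉ A. Suppose there exists an r-dimensional K-subspace U₀ of L^2 with B(U₀) = {T} ∪ A and dim_K(U₀ ∩ T) = r-1 (i.e. {T} ∪ A is an F_q-club of rank r with head T). Then there exist an injective L-linear map φ : L^2 → L^r and a q-subgeometry π₀ = B(V) of PG(r-1,q^n) such that the line l_∞ = PG(φ(L^2)) is tangent to π₀ with centre the point {φ(t) : t ∈ T} (the image of T), l_∞ is not contained in the extension of any hyperplane of π₀, and S(π₀,l_∞) = {L·φ(u) : L·u ∈ {T} ∪ A}. -/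

import Mathlib

open Submodule Module

/-- `BSet L X` is the set of projective points (1-dimensional `L`-subspaces of `W`)
spanned by the nonzero vectors of `X`. -/
def BSet (L : Type*) [Field L] {W : Type*} [AddCommGroup W] [Module L W]
    (X : Set W) : Set (Submodule L W) :=
  {P | ∃ x ∈ X, x ≠ 0 ∧ P = Submodule.span L {x}}

/-- The splash of the `q`-subgeometry `B(V)` of `PG(W)` on the line `PG(U)`:
the set of points of `PG(U)` lying in the `L`-span (extension) of some hyperplane
(`(r-1)`-dimensional `K`-subspace) of `V`. -/
def Splash (K L : Type*) [Field K] [Field L] [Algebra K L]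
    {W : Type*} [AddCommGroup W] [Module L W] [Module K W] [IsScalarTower K L W]
    (V : Submodule K W) (U : Submodule L W) (r : ℕ) : Set (Submodule L W) :=
  {P | Module.finrank L P = 1 ∧ P ≤ U ∧
    ∃ H : Submodule K W, H ≤ V ∧ Module.finrank K H = r - 1 ∧
      P ≤ Submodule.span L (H : Set W)}

/-!
Fix a symplectic form `ω` on the plane `W`, so that `ω(w, u) = 0` exactly when `w` and `u` are
proportional, and a `K`-basis `v` of `U₀`. The map `w ↦ (ω(w, v i))ᵢ` sends `W` to `L ^ r`, and the
form `∑ i, c i * x i` with coefficients in `K` pulls back along it to `ω(·, ∑ i, c i • v i)`. Thus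
the hyperplanes of the canonical subgeometry correspond to the nonzero `u ∈ U₀` up to `K`-multiples,
and the extension of each one meets the image of `W` in the image of `L · u`: the splash is the
linear set of `U₀`.

The image of `w` lies in the subgeometry exactly when `ω(w, ·)` maps `U₀` to `K`. If `w ∉ T`, this
would embed `U₀ ∩ T`, of dimension at least two, into `K`. For `w ∈ T`, `ω(w, ·)` vanishes on the
hyperplane `U₀ ∩ T` of `U₀`, so it maps `U₀` to `K` after scaling `w`.
-/

section Points

variable {K W E : Type*} [Field K] [AddCommGroup W] [Module K W] [AddCommGroup E] [Module K E]

theorem span_singleton_eq_of_isAtom {T : Submodule K W} (hT : IsAtom T) {t : W} (ht : t ∈ T)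
    (ht0 : t ≠ 0) : span K {t} = T :=
  (hT.le_iff_eq (nonzero_span_atom t ht0).1).mp ((span_singleton_le_iff_mem t T).mpr ht)

theorem finrank_map_span_singleton {f : W →ₗ[K] E} (hf : Function.Injective f) {u : W}
    (hu : u ≠ 0) : finrank K ((span K {u}).map f) = 1 := by
  rw [map_span, Set.image_singleton, finrank_span_singleton ((map_ne_zero_iff f hf).mpr hu)]

theorem covBy_of_finrank_add_one_eq {S U : Submodule K W} (hle : S ≤ U)
    (h : finrank K S + 1 = finrank K U) : S ⋖ U := by
  have : FiniteDimensional K U := Module.finite_of_finrank_eq_succ h.symm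
  rw [covBy_iff_quot_is_simple hle, isSimpleModule_iff_finrank_eq_one]
  have hquot := (S.submoduleOf U).finrank_quotient_add_finrank
  rw [(submoduleOfEquivOfLe hle).finrank_eq] at hquot
  change finrank K (U ⧸ S.submoduleOf U) = 1
  omega

theorem exists_linearIndependent_span_range_eq {U : Submodule K W} {r : ℕ} [Module.Finite K U]
    (hU : finrank K U = r) :
    ∃ v : Fin r → W, LinearIndependent K v ∧ span K (Set.range v) = U := by
  let e := finBasisOfFinrankEq K U hU
  refine ⟨U.subtype ∘ e, e.linearIndependent.map' _ U.ker_subtype, ?_⟩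
  rw [Set.range_comp, span_image, e.span_eq, map_subtype_top]

theorem sum_smul_ne_zero_of_linearIndependent {ι : Type*} [Fintype ι] {v : ι → W}
    (hv : LinearIndependent K v) {c : ι → K} (hc : c ≠ 0) : ∑ i, c i • v i ≠ 0 :=
  fun h => hc (funext (Fintype.linearIndependent_iff.mp hv c h))

end Points

section Subgeometry

variable {K L E ι : Type*} [Field K] [Field L] [Algebra K L] [AddCommGroup E] [Module L E]

/-- The `L`-linear form on `E` whose coefficients in the basis `b` are the scalars `c i` of the
small field. Its kernels for `c ≠ 0` are the extensions of the hyperplanes of the subgeometry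
`span K (Set.range b)`. -/
noncomputable def rationalForm (b : Basis ι L E) (c : ι → K) : E →ₗ[L] L :=
  b.constr L fun i => algebraMap K L (c i)

theorem rationalForm_basis (b : Basis ι L E) (c : ι → K) (i : ι) :
    rationalForm b c (b i) = algebraMap K L (c i) :=
  b.constr_basis L _ i

variable [Module K E] [IsScalarTower K L E]

/-- The hyperplane of the subgeometry `span K (Set.range b)` with equation `∑ i, c i * x i = 0`
in the coordinates of `b`. -/
noncomputable def rationalHyperplane (b : Basis ι L E) (c : ι → K) : Submodule K E :=
  (LinearMap.ker ((b.restrictScalars K).constr K c)).map (Submodule.subtype _)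

theorem rationalForm_coe (b : Basis ι L E) (c : ι → K) (x : span K (Set.range b)) :
    rationalForm b c x = algebraMap K L ((b.restrictScalars K).constr K c x) := by
  refine LinearMap.congr_fun (f := ((rationalForm b c).restrictScalars K).domRestrict _)
    (g := Algebra.linearMap K L ∘ₗ (b.restrictScalars K).constr K c) ?_ x
  refine (b.restrictScalars K).ext fun i => ?_
  simp only [LinearMap.domRestrict_apply, LinearMap.coe_restrictScalars, LinearMap.comp_apply,
    Algebra.linearMap_apply, Basis.constr_basis, Basis.restrictScalars_apply, rationalForm_basis]

theorem exists_span_le_ker_rationalForm (b : Basis ι L E) {H : Submodule K E}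
    (hH : H < span K (Set.range b)) :
    ∃ c : ι → K, c ≠ 0 ∧ span L (H : Set E) ≤ LinearMap.ker (rationalForm b c) := by
  obtain ⟨hle, x, hx, hxH⟩ := SetLike.lt_iff_le_and_exists.mp hH
  obtain ⟨f, hfx, hHf⟩ := exists_le_ker_of_notMem hxH
  obtain ⟨c, hc⟩ := ((b.restrictScalars K).constr K).surjective (f.domRestrict _)
  have hform (y : E) (hy : y ∈ span K (Set.range b)) :
      rationalForm b c y = algebraMap K L (f y) := by
    rw [rationalForm_coe b c ⟨y, hy⟩, hc, LinearMap.domRestrict_apply]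
  refine ⟨c, ?_, span_le.mpr fun y hy => ?_⟩
  · rintro rfl
    exact hfx (congr($hc ⟨x, hx⟩).symm.trans (by simp))
  · rw [SetLike.mem_coe, LinearMap.mem_ker, hform y (hle hy), hHf hy, map_zero]

theorem sub_smul_mem_rationalHyperplane (b : Basis ι L E) {c : ι → K} {j : ι} (hj : c j ≠ 0)
    (i : ι) : b i - (c i / c j) • b j ∈ rationalHyperplane b c := by
  let bK := b.restrictScalars K
  refine ⟨bK i - (c i / c j) • bK j, ?_, by simp [bK]⟩
  rw [SetLike.mem_coe, LinearMap.mem_ker, map_sub, map_smul, Basis.constr_basis,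
    Basis.constr_basis, smul_eq_mul, div_mul_cancel₀ _ hj, sub_self]

theorem span_rationalHyperplane_le_ker (b : Basis ι L E) (c : ι → K) :
    span L (rationalHyperplane b c : Set E) ≤ LinearMap.ker (rationalForm b c) := by
  refine span_le.mpr ?_
  rintro _ ⟨x, hx, rfl⟩
  rw [SetLike.mem_coe, LinearMap.mem_ker, subtype_apply, rationalForm_coe,
    LinearMap.mem_ker.mp hx, map_zero]

theorem span_rationalHyperplane (b : Basis ι L E) {c : ι → K} (hc : c ≠ 0) :
    span L (rationalHyperplane b c : Set E) = LinearMap.ker (rationalForm b c) := by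
  obtain ⟨j, hj : c j ≠ 0⟩ := Function.ne_iff.mp hc
  have hle := span_rationalHyperplane_le_ker b c
  have hsup : span L (rationalHyperplane b c : Set E) ⊔ span L {b j} = ⊤ := by
    rw [eq_top_iff, ← b.span_eq, span_le]
    rintro _ ⟨i, rfl⟩
    rw [← sub_add_cancel (b i) ((c i / c j) • b j), ← algebraMap_smul L (c i / c j)]
    refine add_mem_sup (subset_span ?_) (smul_mem _ _ (mem_span_singleton_self _))
    rw [algebraMap_smul]
    exact sub_smul_mem_rationalHyperplane b hj i
  refine hle.antisymm fun x hx => ?_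
  obtain ⟨y, hy, z, hz, rfl⟩ := mem_sup.mp (hsup ▸ mem_top : x ∈ _ ⊔ _)
  obtain ⟨d, rfl⟩ := mem_span_singleton.mp hz
  have hd : d = 0 := by
    simpa [LinearMap.mem_ker.mp (hle hy), rationalForm_basis, hj] using hx
  rwa [hd, zero_smul, add_zero]

theorem finrank_rationalHyperplane [Fintype ι] (b : Basis ι L E) {c : ι → K} (hc : c ≠ 0) :
    finrank K (rationalHyperplane b c) = Fintype.card ι - 1 := by
  let bK := b.restrictScalars K
  have := Module.Finite.of_basis bK
  have hf : bK.constr K c ≠ 0 := (bK.constr K).map_ne_zero_iff.mpr hc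
  rw [rationalHyperplane, finrank_map_subtype_eq, ← finrank_eq_card_basis bK,
    ← Dual.finrank_ker_add_one_of_ne_zero hf, Nat.add_sub_cancel]

theorem exists_hyperplane_le_span_iff [Fintype ι] [Nonempty ι] (b : Basis ι L E)
    {N : Submodule L E} :
    (∃ H ≤ span K (Set.range b), finrank K H = Fintype.card ι - 1 ∧ N ≤ span L (H : Set E)) ↔
      ∃ c : ι → K, c ≠ 0 ∧ N ≤ LinearMap.ker (rationalForm b c) := by
  constructor
  · rintro ⟨H, hle, hH, hN⟩
    have hne : H ≠ span K (Set.range b) := by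
      rintro rfl
      rw [finrank_eq_card_basis (b.restrictScalars K)] at hH
      exact (Nat.sub_lt Fintype.card_pos one_pos).ne' hH
    obtain ⟨c, hc, hHc⟩ := exists_span_le_ker_rationalForm b (hle.lt_of_ne hne)
    exact ⟨c, hc, hN.trans hHc⟩
  · rintro ⟨c, hc, hN⟩
    exact ⟨rationalHyperplane b c, map_subtype_le _ _, finrank_rationalHyperplane b hc,
      hN.trans (span_rationalHyperplane b hc).ge⟩

end Subgeometry

section Plane

variable {L W : Type*} [Field L] [AddCommGroup W] [Module L W]

/-- The symplectic form on a plane whose value is the determinant in the basis `a`. -/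
noncomputable def planeForm (a : Basis (Fin 2) L W) : W →ₗ[L] W →ₗ[L] L :=
  (a.coord 0).smulRight (a.coord 1) - (a.coord 1).smulRight (a.coord 0)

theorem planeForm_apply (a : Basis (Fin 2) L W) (v w : W) :
    planeForm a v w = a.repr v 0 * a.repr w 1 - a.repr v 1 * a.repr w 0 := rfl

theorem neg_planeForm (a : Basis (Fin 2) L W) (v w : W) :
    -planeForm a v w = planeForm a w v := by
  simp only [planeForm_apply]
  ring

theorem planeForm_eq_zero_iff_mem_span_left (a : Basis (Fin 2) L W) {v w : W} (hv : v ≠ 0) :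
    planeForm a v w = 0 ↔ w ∈ span L {v} := by
  rw [planeForm_apply, sub_eq_zero, mem_span_singleton]
  constructor
  · intro h
    obtain ⟨i, hi⟩ : ∃ i, a.repr v i ≠ 0 := by
      by_contra! hzero
      exact hv (a.ext_elem fun i => by simp [hzero])
    refine ⟨a.repr w i / a.repr v i, a.ext_elem fun j => ?_⟩
    rw [map_smul, Finsupp.smul_apply, smul_eq_mul, div_mul_eq_mul_div, div_eq_iff hi]
    fin_cases i <;> fin_cases j <;> simp only [Fin.mk_one, Fin.zero_eta] <;> grind
  · rintro ⟨x, rfl⟩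
    simp only [map_smul, Finsupp.smul_apply, smul_eq_mul]
    ring

theorem planeForm_eq_zero_iff_mem_span_right (a : Basis (Fin 2) L W) {v w : W} (hw : w ≠ 0) :
    planeForm a v w = 0 ↔ v ∈ span L {w} := by
  rw [← neg_planeForm, neg_eq_zero, planeForm_eq_zero_iff_mem_span_left a hw]

theorem eq_zero_of_planeForm_eq_zero (a : Basis (Fin 2) L W) {v : W} (hv : planeForm a v = 0) :
    v = 0 := by
  have hzero (w : W) : a.repr v 0 * a.repr w 1 - a.repr v 1 * a.repr w 0 = 0 := congr($hv w)
  refine a.ext_elem (Fin.forall_fin_two.mpr ⟨?_, ?_⟩)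
  · simpa using hzero (a 1)
  · simpa using hzero (a 0)

end Plane

section Splash

variable {K L W E ι : Type*} [Field K] [Field L] [Algebra K L] [AddCommGroup W] [Module L W]
  [AddCommGroup E] [Module L E] [Fintype ι]

/-- The map `w ↦ ∑ i, ω(w, v i) • b i`, where `ω` is the symplectic form of the plane `W`. It places
`W` in the ambient space of the subgeometry `span K (Set.range b)` so that the splash of the
subgeometry on its image is the linear set of `span K (Set.range v)`. -/
noncomputable def splashMap (a : Basis (Fin 2) L W) (b : Basis ι L E) (v : ι → W) : W →ₗ[L] E :=
  b.equivFun.symm.toLinearMap ∘ₗ LinearMap.pi fun i => (planeForm a).flip (v i)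

theorem repr_splashMap (a : Basis (Fin 2) L W) (b : Basis ι L E) (v : ι → W) (w : W) (i : ι) :
    b.repr (splashMap a b v w) i = planeForm a w (v i) := by
  simp [splashMap, ← Basis.equivFun_apply, -Basis.equivFun_symm_apply]

variable [Module K W] [IsScalarTower K L W]

theorem rationalForm_splashMap (a : Basis (Fin 2) L W) (b : Basis ι L E) (v : ι → W) (c : ι → K)
    (w : W) : rationalForm b c (splashMap a b v w) = planeForm a w (∑ i, c i • v i) := by
  simp only [rationalForm, Basis.constr_apply_fintype, Basis.equivFun_apply, repr_splashMap,
    map_sum, smul_eq_mul, ← algebraMap_smul L (_ : K) (_ : W), map_smul, mul_comm]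

theorem splashMap_injective (a : Basis (Fin 2) L W) (b : Basis ι L E) {v : ι → W}
    (hv : span L (Set.range v) = ⊤) : Function.Injective (splashMap a b v) := by
  refine (injective_iff_map_eq_zero _).mpr fun w hw => ?_
  refine eq_zero_of_planeForm_eq_zero a (LinearMap.ext_on_range hv fun i => ?_)
  rw [← repr_splashMap a b v, hw, map_zero, Finsupp.zero_apply, LinearMap.zero_apply]

theorem range_splashMap_inf_ker_rationalForm (a : Basis (Fin 2) L W) (b : Basis ι L E) (v : ι → W)
    {c : ι → K} (hc : ∑ i, c i • v i ≠ 0) :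
    LinearMap.range (splashMap a b v) ⊓ LinearMap.ker (rationalForm b c) =
      (span L {∑ i, c i • v i}).map (splashMap a b v) := by
  rw [← map_comap_eq]
  congr 1
  ext w
  rw [mem_comap, LinearMap.mem_ker, rationalForm_splashMap,
    planeForm_eq_zero_iff_mem_span_right a hc]

variable [Module K E] [IsScalarTower K L E]

theorem not_range_splashMap_le_span_hyperplane [Nonempty ι] (a : Basis (Fin 2) L W)
    (b : Basis ι L E) {v : ι → W} (hvK : LinearIndependent K v) (hvL : span L (Set.range v) = ⊤)
    {H : Submodule K E} (hH : H ≤ span K (Set.range b))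
    (hrank : finrank K H = Fintype.card ι - 1) :
    ¬ LinearMap.range (splashMap a b v) ≤ span L (H : Set E) := by
  intro hle
  obtain ⟨c, hc, hker⟩ := (exists_hyperplane_le_span_iff b).mp ⟨H, hH, hrank, hle⟩
  have hu := sum_smul_ne_zero_of_linearIndependent hvK hc
  have hdim := finrank_map_span_singleton (splashMap_injective a b hvL) hu
  rw [← range_splashMap_inf_ker_rationalForm a b v hu, inf_eq_left.mpr hker,
    LinearMap.finrank_range_of_inj (splashMap_injective a b hvL), finrank_eq_card_basis a] at hdim
  norm_num at hdim

theorem splash_range_splashMap [Nonempty ι] (a : Basis (Fin 2) L W) (b : Basis ι L E) {v : ι → W}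
    (hvK : LinearIndependent K v) (hvL : span L (Set.range v) = ⊤) :
    Splash K L (span K (Set.range b)) (LinearMap.range (splashMap a b v)) (Fintype.card ι) =
      Submodule.map (splashMap a b v) '' BSet L (span K (Set.range v) : Set W) := by
  have hrank {u : W} (hu : u ≠ 0) : finrank L ((span L {u}).map (splashMap a b v)) = 1 :=
    finrank_map_span_singleton (splashMap_injective a b hvL) hu
  ext P
  constructor
  · rintro ⟨hP, hrange, H⟩
    obtain ⟨c, hc, hker⟩ := (exists_hyperplane_le_span_iff b).mp H
    have hu := sum_smul_ne_zero_of_linearIndependent hvK hc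
    have hle := range_splashMap_inf_ker_rationalForm a b v hu ▸ le_inf hrange hker
    have hmem : ∑ i, c i • v i ∈ span K (Set.range v) :=
      (mem_span_range_iff_exists_fun K).mpr ⟨c, rfl⟩
    have := Module.finite_of_finrank_eq_succ (hrank hu)
    exact ⟨_, ⟨_, hmem, hu, rfl⟩, (eq_of_le_of_finrank_eq hle (hP.trans (hrank hu).symm)).symm⟩
  · rintro ⟨_, ⟨u, hmem, hu, rfl⟩, rfl⟩
    obtain ⟨c, rfl⟩ := (mem_span_range_iff_exists_fun K).mp hmem
    have hc : c ≠ 0 := by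
      rintro rfl
      simp at hu
    refine ⟨hrank hu, LinearMap.map_le_range, (exists_hyperplane_le_span_iff b).mpr ⟨c, hc, ?_⟩⟩
    exact (range_splashMap_inf_ker_rationalForm a b v hu).ge.trans inf_le_right

theorem splashMap_mem_span_iff (a : Basis (Fin 2) L W) (b : Basis ι L E) {v : ι → W} {w : W} :
    splashMap a b v w ∈ span K (Set.range b) ↔
      ∀ u ∈ span K (Set.range v), planeForm a w u ∈ (1 : Submodule K L) := by
  simp only [Basis.mem_span_iff_repr_mem, repr_splashMap]
  refine ⟨fun h => ?_, fun h i => mem_one.mp (h _ (subset_span (Set.mem_range_self i)))⟩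
  suffices span K (Set.range v) ≤ (1 : Submodule K L).comap ((planeForm a w).restrictScalars K) by
    exact this
  refine span_le.mpr ?_
  rintro _ ⟨i, rfl⟩
  exact mem_one.mpr (h i)

end Splash

section Club

variable {K L W : Type*} [Field K] [Field L] [Algebra K L] [AddCommGroup W] [Module L W]
  [Module K W] [IsScalarTower K L W]

theorem mem_of_planeForm_mem_one (a : Basis (Fin 2) L W) {U : Submodule K W} {T : Submodule L W}
    (hUT : 1 < finrank K ↥(U ⊓ T.restrictScalars K)) {w : W}
    (hw : ∀ u ∈ U, planeForm a w u ∈ (1 : Submodule K L)) : w ∈ T := by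
  by_contra hwT
  let f : ↥(U ⊓ T.restrictScalars K) →ₗ[K] (1 : Submodule K L) :=
    ((planeForm a w).restrictScalars K).restrict fun u hu => hw u hu.1
  have hf : Function.Injective f := by
    refine (injective_iff_map_eq_zero _).mpr fun x hx => ?_
    have hform : planeForm a w x = 0 := congr($hx)
    by_contra hx0
    have hx0' : (x : W) ≠ 0 := by simpa using hx0
    exact hwT ((span_singleton_le_iff_mem _ T).mpr x.2.2
      ((planeForm_eq_zero_iff_mem_span_right a hx0').mp hform))
  have hone : finrank K (1 : Submodule K L) = 1 := by
    rw [one_eq_span, finrank_span_singleton one_ne_zero]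
  have := Module.finite_of_finrank_eq_succ hone
  have := LinearMap.finrank_le_finrank_of_injective hf
  omega

theorem exists_planeForm_mem_one (a : Basis (Fin 2) L W) {U : Submodule K W} {T : Submodule L W}
    (hT : IsAtom T) (hUT : U ⊓ T.restrictScalars K ⋖ U) :
    ∃ w ∈ T, w ≠ 0 ∧ ∀ u ∈ U, planeForm a w u ∈ (1 : Submodule K L) := by
  obtain ⟨t, ht, ht0⟩ := exists_mem_ne_zero_of_ne_bot hT.1
  have horth {y : W} : planeForm a t y = 0 ↔ y ∈ T := by
    rw [planeForm_eq_zero_iff_mem_span_left a ht0,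
      span_singleton_eq_of_isAtom hT ht ht0]
  obtain ⟨u₁, hu₁, hu₁T⟩ := Set.exists_of_ssubset hUT.lt
  have hne : planeForm a t u₁ ≠ 0 := fun h => hu₁T ⟨hu₁, horth.mp h⟩
  have hU : U ⊓ T.restrictScalars K ⊔ span K {u₁} = U := by
    refine (hUT.eq_or_eq le_sup_left ?_).resolve_left ?_
    · exact sup_le inf_le_left ((span_singleton_le_iff_mem _ _).mpr hu₁)
    · exact fun h => hu₁T (h ▸ mem_sup_right (mem_span_singleton_self _))
  refine ⟨(planeForm a t u₁)⁻¹ • t, smul_mem _ _ ht, smul_ne_zero (inv_ne_zero hne) ht0,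
    fun u hu => ?_⟩
  obtain ⟨y, hy, z, hz, rfl⟩ := mem_sup.mp (hU ▸ hu)
  obtain ⟨k, rfl⟩ := mem_span_singleton.mp hz
  refine mem_one.mpr ⟨k, ?_⟩
  rw [map_smul, LinearMap.smul_apply, map_add, horth.mpr hy.2, zero_add,
    ← algebraMap_smul L k u₁, map_smul, smul_eq_mul, smul_eq_mul, mul_left_comm,
    inv_mul_cancel₀ hne, mul_one]

theorem span_eq_top_of_inf_ne_bot_of_not_le (hW : finrank L W = 2) {U : Submodule K W}
    {T : Submodule L W} (hT : IsAtom T) (hne : U ⊓ T.restrictScalars K ≠ ⊥)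
    (hUT : ¬ U ≤ T.restrictScalars K) : span L (U : Set W) = ⊤ := by
  have : FiniteDimensional L W := Module.finite_of_finrank_eq_succ hW
  obtain ⟨t, ⟨htU, htT⟩, ht0⟩ := exists_mem_ne_zero_of_ne_bot hne
  have hle : T ≤ span L (U : Set W) := by
    rw [← span_singleton_eq_of_isAtom hT htT ht0, span_singleton_le_iff_mem]
    exact subset_span htU
  have hlt : T < span L (U : Set W) :=
    hle.lt_of_ne fun h => hUT fun u hu => h ▸ subset_span hu
  have hrank := finrank_lt_finrank_of_lt hlt
  rw [isAtom_iff_finrank_eq_one.mp hT] at hrank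
  exact eq_top_of_finrank_eq ((finrank_le _).antisymm (hW ▸ hrank))

theorem points_le_range_splashMap_eq {E ι : Type*} [AddCommGroup E] [Module L E] [Module K E]
    [IsScalarTower K L E] [Fintype ι] (a : Basis (Fin 2) L W) (b : Basis ι L E) {v : ι → W}
    (hv : span L (Set.range v) = ⊤) {T : Submodule L W} (hT : IsAtom T)
    (hvT : span K (Set.range v) ⊓ T.restrictScalars K ⋖ span K (Set.range v))
    (hrank : 1 < finrank K ↥(span K (Set.range v) ⊓ T.restrictScalars K)) :
    {P | P ∈ BSet L (span K (Set.range b) : Set E) ∧ P ≤ LinearMap.range (splashMap a b v)} =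
      {T.map (splashMap a b v)} := by
  have hmap {w : W} (hwT : w ∈ T) (hw : w ≠ 0) :
      span L {splashMap a b v w} = T.map (splashMap a b v) := by
    rw [← span_singleton_eq_of_isAtom hT hwT hw, map_span, Set.image_singleton]
  ext P
  constructor
  · rintro ⟨⟨x, hx, hx0, rfl⟩, hrange⟩
    obtain ⟨w, rfl⟩ := (span_singleton_le_iff_mem _ _).mp hrange
    have hw : w ≠ 0 := by
      rintro rfl
      exact hx0 (map_zero _)
    exact hmap (mem_of_planeForm_mem_one a hrank ((splashMap_mem_span_iff a b).mp hx)) hw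
  · rintro rfl
    obtain ⟨w, hwT, hw, hform⟩ := exists_planeForm_mem_one a hT hvT
    refine ⟨⟨_, (splashMap_mem_span_iff a b).mpr hform, ?_, (hmap hwT hw).symm⟩,
      LinearMap.map_le_range⟩
    exact (map_ne_zero_iff _ (splashMap_injective a b hv)).mpr hw

end Club

theorem club_is_tangent_splash_general
    {K L W : Type*} [Field K] [Field L] [Algebra K L] [AddCommGroup W] [Module L W]
    [Module K W] [IsScalarTower K L W] {r : ℕ} (hr : 3 ≤ r) (hW : finrank L W = 2)
    {T : Submodule L W} (hT : finrank L T = 1) {U₀ : Submodule K W} (hU₀ : finrank K U₀ = r)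
    (hU₀T : finrank K ↥(U₀ ⊓ T.restrictScalars K) = r - 1) :
    ∃ φ : W →ₗ[L] (Fin r → L), Function.Injective φ ∧
      ∃ V : Submodule K (Fin r → L),
        finrank K V = r ∧
        span L (V : Set (Fin r → L)) = ⊤ ∧
        (∀ H : Submodule K (Fin r → L), H ≤ V → finrank K H = r - 1 →
          ¬ LinearMap.range φ ≤ span L (H : Set (Fin r → L))) ∧
        {P | P ∈ BSet L (V : Set (Fin r → L)) ∧ P ≤ LinearMap.range φ} = {T.map φ} ∧
        Splash K L V (LinearMap.range φ) r = Submodule.map φ '' BSet L (U₀ : Set W) := by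
  have : Nonempty (Fin r) := ⟨⟨0, by omega⟩⟩
  have : FiniteDimensional L W := Module.finite_of_finrank_eq_succ hW
  have : FiniteDimensional K U₀ := FiniteDimensional.of_finrank_pos (by omega)
  have hatom : IsAtom T := isAtom_iff_finrank_eq_one.mpr hT
  have hcov : U₀ ⊓ T.restrictScalars K ⋖ U₀ := covBy_of_finrank_add_one_eq inf_le_left (by omega)
  have hne : U₀ ⊓ T.restrictScalars K ≠ ⊥ := by
    intro h
    rw [h, finrank_bot] at hU₀T
    omega
  have hspan := span_eq_top_of_inf_ne_bot_of_not_le hW hatom hne (inf_lt_left.mp hcov.lt)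
  obtain ⟨v, hvK, rfl⟩ := exists_linearIndependent_span_range_eq hU₀
  rw [span_span_of_tower] at hspan
  let a := finBasisOfFinrankEq L W hW
  let b := Pi.basisFun L (Fin r)
  refine ⟨splashMap a b v, splashMap_injective a b hspan, span K (Set.range b), ?_, ?_,
    fun H hH hrank => ?_, ?_, ?_⟩
  · rw [finrank_eq_card_basis (b.restrictScalars K), Fintype.card_fin]
  · rw [span_span_of_tower, b.span_eq]
  · exact not_range_splashMap_le_span_hyperplane a b hvK hspan hH
      (by rwa [Fintype.card_fin])
  · exact points_le_range_splashMap_eq a b hspan hatom hcov (by omega)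
  · simpa only [Fintype.card_fin] using splash_range_splashMap a b hvK hspan

/-- an `F_q`-club of rank `r` with head `T` on `PG(1,q^n)` is (the image
under a suitable embedding of) a tangent splash with centre `T`. -/
theorem club_is_tangent_splash
    (K L : Type*) [Field K] [Field L] [Algebra K L] [Fintype K] [Fintype L]
    (q r n : ℕ) (hq : Fintype.card K = q)
    (hr : 3 ≤ r) (hrn : r ≤ n) (hrank : Module.finrank K L = n)
    (T : Submodule L (Fin 2 → L)) (hT : Module.finrank L T = 1)
    (A : Set (Submodule L (Fin 2 → L)))
    (hA : ∀ P ∈ A, Module.finrank L P = 1)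
    (hAcard : A.ncard = q ^ (r - 1)) (hTA : T ∉ A)
    (U₀ : Submodule K (Fin 2 → L)) (hU₀ : Module.finrank K U₀ = r)
    (hU₀B : BSet L (U₀ : Set (Fin 2 → L)) = insert T A)
    (hU₀T : Module.finrank K ↥(U₀ ⊓ T.restrictScalars K) = r - 1) :
    ∃ φ : (Fin 2 → L) →ₗ[L] (Fin r → L), Function.Injective φ ∧
      ∃ V : Submodule K (Fin r → L),
        Module.finrank K V = r ∧
        Submodule.span L (V : Set (Fin r → L)) = ⊤ ∧
        (∀ H : Submodule K (Fin r → L), H ≤ V → Module.finrank K H = r - 1 →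
          ¬ LinearMap.range φ ≤ Submodule.span L (H : Set (Fin r → L))) ∧
        {P | P ∈ BSet L (V : Set (Fin r → L)) ∧ P ≤ LinearMap.range φ} =
          {Submodule.map φ T} ∧
        Splash K L V (LinearMap.range φ) r =
          (fun P => Submodule.map φ P) '' insert T A := by
  rw [← hU₀B]
  exact club_is_tangent_splash_general hr (finrank_fin_fun L) hT hU₀ hU₀T
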